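/- arXiv:2107.09937 — 2 statements merged into one kernel-verified Lean document; each statement's English description precedes it below -/
import Mathlib

section
/- Let E be a real normed space, H a real inner product space, φ : E → H a feature map, and f : ℝ → ℝ an antitone (non-increasing) function such that ⟨φ(u), φ(v)⟩ = f(‖u − v‖) for all u, v ∈ E. Then for every c ≥ 0, every w ∈ H, every x ∈ E and every δ ∈ E with ‖δ‖ ≤ c, one has ⟨w, φ(x + δ)⟩ ≤ ⟨w, φ(x)⟩ + √(2·f(0) − 2·f(c)) · ‖w‖. Consequently, the supremum of ⟨w, φ(x + δ)⟩ over ‖δ‖ ≤ c is at most the supremum of ⟨w, φ(x) + δ_φ⟩ over all δ_φ ∈ H with ‖δ_φ‖ ≤ √(2·f(0) − 2·f(c)). -/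
open scoped RealInnerProductSpace

/-! The kernel determines distances between features: `‖φ u - φ v‖ ^ 2 = 2 f(0) - 2 f(dist u v)`.
As `f` decreases, `φ` therefore maps the ball of radius `c` about `x` into the ball of radius
`√(2 f(0) - 2 f(c))` about `φ x`, on which `⟪w, ·⟫` is controlled by Cauchy–Schwarz. -/

section

open Metric Set

variable {X H : Type*} [PseudoMetricSpace X] [SeminormedAddCommGroup H] [InnerProductSpace ℝ H]

theorem real_inner_le_add_of_mem_closedBall {u v : H} {r : ℝ} (w : H) (hv : v ∈ closedBall u r) :
    ⟪w, v⟫ ≤ ⟪w, u⟫ + r * ‖w‖ := by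
  rw [mem_closedBall_iff_norm] at hv
  rw [← sub_le_iff_le_add', ← inner_sub_right]
  calc
    ⟪w, v - u⟫ ≤ ‖w‖ * ‖v - u‖ := real_inner_le_norm w (v - u)
    _ ≤ r * ‖w‖ := by rw [mul_comm]; gcongr

theorem bddAbove_real_inner_image_closedBall (w u : H) (r : ℝ) :
    BddAbove ((fun v => ⟪w, v⟫) '' closedBall u r) :=
  ⟨⟪w, u⟫ + r * ‖w‖, forall_mem_image.2 fun _ hv => real_inner_le_add_of_mem_closedBall w hv⟩

theorem norm_sub_sq_of_inner_eq_dist {φ : X → H} {f : ℝ → ℝ}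
    (hk : ∀ u v, ⟪φ u, φ v⟫ = f (dist u v)) (u v : X) :
    ‖φ u - φ v‖ ^ 2 = 2 * f 0 - 2 * f (dist u v) := by
  have norm_sq (z : X) : ‖φ z‖ ^ 2 = f 0 := by
    rw [← real_inner_self_eq_norm_sq, hk, dist_self]
  rw [norm_sub_sq_real, norm_sq, norm_sq, hk]
  ring

theorem mapsTo_closedBall_of_inner_eq_dist {φ : X → H} {f : ℝ → ℝ} (hf : AntitoneOn f (Ici 0))
    (hk : ∀ u v, ⟪φ u, φ v⟫ = f (dist u v)) (x : X) (c : ℝ) :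
    MapsTo φ (closedBall x c) (closedBall (φ x) √(2 * f 0 - 2 * f c)) := by
  intro y hy
  have hfc : f c ≤ f (dist y x) := hf dist_nonneg (dist_nonneg.trans hy) hy
  rw [mem_closedBall_iff_norm]
  apply Real.le_sqrt_of_sq_le
  rw [norm_sub_sq_of_inner_eq_dist hk]
  linarith

theorem setOf_exists_norm_le_eq_image_closedBall {E α : Type*} [SeminormedAddCommGroup E]
    (g : E → α) (x : E) (c : ℝ) :
    {a | ∃ δ : E, ‖δ‖ ≤ c ∧ a = g (x + δ)} = g '' closedBall x c := by
  ext a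
  constructor
  · rintro ⟨δ, hδ, rfl⟩
    exact mem_image_of_mem g (add_mem_closedBall_iff_norm.2 hδ)
  · rintro ⟨y, hy, rfl⟩
    exact ⟨y - x, mem_closedBall_iff_norm.1 hy, by rw [add_sub_cancel]⟩

theorem featureMap_perturbation_inner_le_general {φ : X → H} {f : ℝ → ℝ}
    (hf : AntitoneOn f (Ici 0)) (hk : ∀ u v, ⟪φ u, φ v⟫ = f (dist u v))
    {c : ℝ} (hc : 0 ≤ c) (w : H) (x : X) :
    (∀ y ∈ closedBall x c, ⟪w, φ y⟫ ≤ ⟪w, φ x⟫ + √(2 * f 0 - 2 * f c) * ‖w‖)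
    ∧ sSup ((fun y => ⟪w, φ y⟫) '' closedBall x c)
        ≤ sSup ((fun v => ⟪w, v⟫) '' closedBall (φ x) √(2 * f 0 - 2 * f c)) := by
  have hφ := mapsTo_closedBall_of_inner_eq_dist hf hk x c
  refine ⟨fun y hy => real_inner_le_add_of_mem_closedBall w (hφ hy), ?_⟩
  refine csSup_le_csSup (bddAbove_real_inner_image_closedBall w _ _)
    ((nonempty_closedBall.2 hc).image _) ?_
  rintro _ ⟨y, hy, rfl⟩
  exact mem_image_of_mem _ (hφ hy)

end

/-- Theorem 1 of the paper (Xu et al.): for a translation-invariant radial kernel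
`⟪φ u, φ v⟫ = f ‖u - v‖` with `f` antitone, a bounded input perturbation is dominated, after
feature mapping, by an explicit additive perturbation in the kernel space; consequently the
corresponding suprema are ordered. -/
theorem featureMap_perturbation_inner_le
    {E H : Type*} [NormedAddCommGroup E] [NormedSpace ℝ E]
    [NormedAddCommGroup H] [InnerProductSpace ℝ H]
    (φ : E → H) (f : ℝ → ℝ) (hf : Antitone f)
    (hk : ∀ u v : E, ⟪φ u, φ v⟫ = f ‖u - v‖)
    (c : ℝ) (hc : 0 ≤ c) (w : H) (x : E) :
    (∀ δ : E, ‖δ‖ ≤ c →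
      ⟪w, φ (x + δ)⟫ ≤ ⟪w, φ x⟫ + Real.sqrt (2 * f 0 - 2 * f c) * ‖w‖)
    ∧ sSup {r : ℝ | ∃ δ : E, ‖δ‖ ≤ c ∧ r = ⟪w, φ (x + δ)⟫}
        ≤ sSup {r : ℝ | ∃ dφ : H, ‖dφ‖ ≤ Real.sqrt (2 * f 0 - 2 * f c) ∧
            r = ⟪w, φ x + dφ⟫} := by
  have ⟨inner_le, sSup_le⟩ := featureMap_perturbation_inner_le_general (φ := φ)
    (hf.antitoneOn _) (by simpa only [dist_eq_norm] using hk) hc w x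
  refine ⟨fun δ hδ => inner_le (x + δ) (add_mem_closedBall_iff_norm.2 hδ), ?_⟩
  rwa [setOf_exists_norm_le_eq_image_closedBall (fun y => ⟪w, φ y⟫),
    setOf_exists_norm_le_eq_image_closedBall (fun v => ⟪w, v⟫)]
end

section
/- Let θ ∈ (1/2, 1] and β > 0. Suppose the real sequence (e_t)_{t ≥ 1} satisfies e₁ ≥ 0 and e_{t+1} ≤ (1 − 2θ/t)·e_t + β/t² for all t ≥ 1. Then for all t ≥ 1, e_t ≤ Q²/t, where Q² := max{e₁, 2β, β/(2θ − 1)}. -/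
/-!
If `e_t ≤ Q / t` and `β ≤ (c - 1) Q`, the recursion `e_{t+1} ≤ (1 - c / t) e_t + β / t²` gives
`e_{t+1} ≤ Q (t - 1) / t² ≤ Q / (t + 1)`, because `(t - 1) (t + 1) ≤ t²`. Multiplying the bound on
`e_t` by `1 - c / t` requires `c ≤ t`, so with `1 < c = 2θ ≤ 2` the induction can only start at
`t = 2`. There `e_2 ≤ (1 - c) e_1 + β ≤ β ≤ Q / 2`, the sign of `e_1` absorbing the negative
coefficient.
-/

section DiminishingStepsize

variable {K : Type*} [Field K] [LinearOrder K] [IsStrictOrderedRing K]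

lemma one_sub_div_mul_add_div_sq_le_div_add_one {c β Q x t : K} (ht : 0 < t) (hct : c ≤ t)
    (hQ : 0 ≤ Q) (hβQ : β ≤ (c - 1) * Q) (hx : x ≤ Q / t) :
    (1 - c / t) * x + β / t ^ 2 ≤ Q / (t + 1) := by
  have hcoef : 0 ≤ 1 - c / t := sub_nonneg.2 ((div_le_one ht).2 hct)
  calc (1 - c / t) * x + β / t ^ 2
      ≤ (1 - c / t) * (Q / t) + (c - 1) * Q / t ^ 2 := by gcongr
    _ = Q * (t - 1) / t ^ 2 := by field_simp; ring
    _ ≤ Q / (t + 1) := by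
      rw [div_le_div_iff₀ (by positivity) (by positivity)]
      linarith

lemma le_div_of_le_one_sub_div_mul_add_div_sq {c β Q : K} {e : ℕ → K} {n : ℕ} (hn : 0 < n)
    (hcn : c ≤ n) (hQ : 0 ≤ Q) (hβQ : β ≤ (c - 1) * Q) (hen : e n ≤ Q / n)
    (hrec : ∀ t, n ≤ t → e (t + 1) ≤ (1 - c / t) * e t + β / (t : K) ^ 2) {t : ℕ} (ht : n ≤ t) :
    e t ≤ Q / t := by
  induction t, ht using Nat.le_induction with
  | base => exact hen
  | succ t ht ih =>
    have ht_pos : (0 : K) < t := Nat.cast_pos.2 (hn.trans_le ht)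
    have hct : c ≤ t := hcn.trans (Nat.cast_le.2 ht)
    rw [Nat.cast_succ]
    exact (hrec t ht).trans (one_sub_div_mul_add_div_sq_le_div_add_one ht_pos hct hQ hβQ ih)

theorem error_recursion_diminishing_general {θ β : K} (hθ : θ ∈ Set.Ioc (1 / 2) 1) {e : ℕ → K}
    (he1 : 0 ≤ e 1)
    (hrec : ∀ t : ℕ, 1 ≤ t → e (t + 1) ≤ (1 - 2 * θ / t) * e t + β / (t : K) ^ 2)
    {t : ℕ} (ht : 1 ≤ t) :
    e t ≤ max (e 1) (max (2 * β) (β / (2 * θ - 1))) / t := by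
  obtain ⟨hθ_gt, hθ_le⟩ := hθ
  set Q := max (e 1) (max (2 * β) (β / (2 * θ - 1)))
  have he1Q : e 1 ≤ Q := le_max_left _ _
  have h2βQ : 2 * β ≤ Q := le_max_of_le_right (le_max_left _ _)
  have h2θ : 0 < 2 * θ - 1 := by linarith
  have hβQ : β ≤ (2 * θ - 1) * Q :=
    (div_le_iff₀' h2θ).1 (le_max_of_le_right (le_max_right _ _))
  have he2β : e 2 ≤ β := by
    have hrec1 : e 2 ≤ (1 - 2 * θ) * e 1 + β := by simpa using hrec 1 le_rfl
    linarith [mul_nonneg h2θ.le he1]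
  have he2Q : e 2 ≤ Q / (2 : ℕ) := by
    rw [Nat.cast_ofNat]
    linarith
  have h2θ_le : 2 * θ ≤ (2 : ℕ) := by
    rw [Nat.cast_ofNat]
    linarith
  rcases ht.eq_or_lt with rfl | ht2
  · simpa using he1Q
  · exact le_div_of_le_one_sub_div_mul_add_div_sq two_pos h2θ_le (he1.trans he1Q) hβQ he2Q
      (fun s hs ↦ hrec s (one_le_two.trans hs)) ht2

end DiminishingStepsize

/-- Deterministic core of the paper's Lemma 2 (error due to random data, diminishing stepsize):
if `e₁ ≥ 0` and `e_{t+1} ≤ (1 - 2θ/t) e_t + β/t²` with `θ ∈ (1/2, 1]`, then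
`e_t ≤ Q²/t` for all `t ≥ 1`, where `Q² = max{e₁, 2β, β/(2θ - 1)}`. -/
theorem error_recursion_diminishing (θ β : ℝ) (hθ : θ ∈ Set.Ioc (1 / 2 : ℝ) 1)
    (hβ : 0 < β) (e : ℕ → ℝ) (he1 : 0 ≤ e 1)
    (hrec : ∀ t : ℕ, 1 ≤ t → e (t + 1) ≤ (1 - 2 * θ / t) * e t + β / (t : ℝ) ^ 2) :
    ∀ t : ℕ, 1 ≤ t →
      e t ≤ max (e 1) (max (2 * β) (β / (2 * θ - 1))) / t :=
  fun _ ht ↦ error_recursion_diminishing_general hθ he1 hrec ht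
end
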